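/- Kouchnirenko–Bernstein theorem (upper bound, two variables): if f, g ∈ ℂ[X,Y] are quasi-convenient and coprime, then the sum over all common zeros P ∈ ℂ² of the intersection multiplicities (f,g)_P is at most ν∞(f,g) = Area(Δ∞(fg)) − Area(Δ∞(f)) − Area(Δ∞(g)). -/

import Mathlib

open MvPolynomial MeasureTheory Pointwise

noncomputable section

/-- Polynomials in two complex variables. -/
abbrev P2 := MvPolynomial (Fin 2) ℂ

/-- The `w`-weight of a monomial exponent. -/
def wt (w : ℝ × ℝ) (m : Fin 2 →₀ ℕ) : ℝ := w.1 * (m 0 : ℝ) + w.2 * (m 1 : ℝ)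

/-- `d_w(f)`: maximal `w`-weight of a monomial of `f`. -/
def dw (w : ℝ × ℝ) (f : P2) : ℝ := sSup (wt w '' (f.support : Set (Fin 2 →₀ ℕ)))

open Classical in
/-- The initial form `init(f, w)`: sum of the monomials of `f` of maximal `w`-weight. -/
def initForm (w : ℝ × ℝ) (f : P2) : P2 :=
  ∑ m ∈ f.support, if wt w m = dw w f then monomial m (f.coeff m) else 0

/-- `f` is quasi-convenient: some pure power of `X` and some pure power of `Y`
occur in `f` with nonzero coefficient. -/
def QuasiConvenient (f : P2) : Prop :=
  (∃ a : ℕ, f.coeff (Finsupp.single 0 a) ≠ 0) ∧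
  (∃ b : ℕ, f.coeff (Finsupp.single 1 b) ≠ 0)

/-- The Newton diagram at infinity `Δ∞(f)`. -/
def newton (f : P2) : Set (ℝ × ℝ) :=
  convexHull ℝ ({(0, 0)} ∪ {p : ℝ × ℝ | ∃ m ∈ f.support, p = ((m 0 : ℝ), (m 1 : ℝ))})

/-- Area (2-dimensional Lebesgue measure) of a plane set. -/
def area (S : Set (ℝ × ℝ)) : ℝ := (volume S).toReal

/-- `ν∞(f, g)`. -/
def nuInf (f g : P2) : ℝ := area (newton (f * g)) - area (newton f) - area (newton g)

/-- `f` is nondegenerate at infinity. -/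
def NondegAtInf (f : P2) : Prop :=
  ∀ w : ℝ × ℝ, (0 < w.1 ∨ 0 < w.2) →
    ¬ ∃ x y : ℂ, x ≠ 0 ∧ y ≠ 0 ∧
      eval ![x, y] (initForm w f) = 0 ∧
      eval ![x, y] (pderiv 0 (initForm w f)) = 0 ∧
      eval ![x, y] (pderiv 1 (initForm w f)) = 0

/-- The pair `(f, g)` is nondegenerate at infinity. -/
def PairNondegAtInf (f g : P2) : Prop :=
  ∀ w : ℝ × ℝ, (0 < w.1 ∨ 0 < w.2) →
    ¬ ∃ x y : ℂ, x ≠ 0 ∧ y ≠ 0 ∧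
      eval ![x, y] (initForm w f) = 0 ∧ eval ![x, y] (initForm w g) = 0

/-- `g` and `h` have no common nonunit factor. -/
def CoprimeDiv (g h : P2) : Prop := ∀ d : P2, d ∣ g → d ∣ h → IsUnit d

/-- `f` is nearly irreducible: positive degree, and any two nonconstant factors
have a common zero in `ℂ²`. -/
def NearlyIrreducible (f : P2) : Prop :=
  0 < f.totalDegree ∧
  ∀ g h : P2, g ∣ f → h ∣ f → 0 < g.totalDegree → 0 < h.totalDegree →
    ∃ x y : ℂ, eval ![x, y] g = 0 ∧ eval ![x, y] h = 0

/-- The maximal ideal of polynomials vanishing at a point `P ∈ ℂ²`. -/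
def mIdeal (Pt : ℂ × ℂ) : Ideal P2 := RingHom.ker (eval ![Pt.1, Pt.2] : P2 →+* ℂ)

instance (Pt : ℂ × ℂ) : (mIdeal Pt).IsPrime := RingHom.ker_isPrime _

/-- Intersection multiplicity `(f, g)_P`: the `ℂ`-dimension of the quotient of the
local ring of `ℂ²` at `P` by the ideal generated by `f` and `g`. -/
def interMult (f g : P2) (Pt : ℂ × ℂ) : ℕ :=
  Module.finrank ℂ
    (Localization.AtPrime (mIdeal Pt) ⧸
      Ideal.span {algebraMap P2 (Localization.AtPrime (mIdeal Pt)) f,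
                  algebraMap P2 (Localization.AtPrime (mIdeal Pt)) g})

/-!
For functions `h` on directions with a positive coordinate, let `P(h)` be the polygon in the
quadrant `x, y ≥ 0` cut out by the half-planes `⟨w, z⟩ ≤ h w`, and `L(h)` the space of polynomials
with exponents in `P(h)`. Since initial forms multiply, the support functions `d f`, `d g` of the
Newton diagrams satisfy `d (f * p) = d f + d p`, so the relations between multiples of `f` and of
`g` in `L(h + d f + d g)` are exactly those coming from `L(h)`. Counting dimensions bounds the part
of `K[X, Y] / (f, g)` reached by `L(h + d f + d g)` by the mixed second difference of lattice point
counts. Taking `h` large enough to reach a given finite-dimensional subspace, and summing over the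
translates `h + i * d f + j * d g` with `i, j < N`, the differences telescope; dividing by `N ^ 2`
and letting `N` tend to infinity turns lattice point counts into areas, and `h` drops out. Hence
`K[X, Y] / (f, g)` has finite dimension at most `Area (Δ∞(f * g)) - Area (Δ∞(f)) - Area (Δ∞(g))`.
It is then Artinian, so it maps onto its localizations at distinct primes, jointly onto their
product by the Chinese remainder theorem, and the sum of the local dimensions is at most the global
one.
-/

/-! ### Weights of finite sets of exponents -/

lemma wt_add (w : ℝ × ℝ) (m n : Fin 2 →₀ ℕ) : wt w (m + n) = wt w m + wt w n := by
  simp only [wt, Finsupp.add_apply, Nat.cast_add]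
  ring

lemma wt_single_zero (w : ℝ × ℝ) (a : ℕ) : wt w (Finsupp.single 0 a) = w.1 * a := by
  simp [wt]

lemma wt_single_one (w : ℝ × ℝ) (b : ℕ) : wt w (Finsupp.single 1 b) = w.2 * b := by
  simp [wt]

/-- The largest `w`-weight of an exponent in `A`, that is, the support function of `A` in the
direction `w`; it is `0` when `A` is empty. -/
def maxWt (A : Finset (Fin 2 →₀ ℕ)) (w : ℝ × ℝ) : ℝ :=
  sSup (wt w '' (A : Set (Fin 2 →₀ ℕ)))

/-- The Newton diagram at infinity of a set of exponents; `newton f` is the case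
`A = f.support`. -/
def newtonHull (A : Finset (Fin 2 →₀ ℕ)) : Set (ℝ × ℝ) :=
  convexHull ℝ ({(0, 0)} ∪ {p : ℝ × ℝ | ∃ m ∈ A, p = ((m 0 : ℝ), (m 1 : ℝ))})

/-- The set `A` contains a point of either coordinate axis; `QuasiConvenient f` is the case
`A = f.support`. -/
def MeetsAxes (A : Finset (Fin 2 →₀ ℕ)) : Prop :=
  (∃ a : ℕ, Finsupp.single 0 a ∈ A) ∧ ∃ b : ℕ, Finsupp.single 1 b ∈ A

/-- The directions in which the notions at infinity are tested: `w` has a positive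
coordinate. -/
def IsOutward (w : ℝ × ℝ) : Prop := 0 < w.1 ∨ 0 < w.2

/-- The largest coordinate of `w`. In outward directions this is the support function of the
triangle with vertices `(0, 0)`, `(1, 0)` and `(0, 1)`. -/
def simplexWt (w : ℝ × ℝ) : ℝ := max w.1 w.2

lemma IsOutward.simplexWt_nonneg {w : ℝ × ℝ} (hw : IsOutward w) : 0 ≤ simplexWt w :=
  (lt_max_iff.2 hw).le

lemma wt_le_degree_mul_simplexWt (w : ℝ × ℝ) (m : Fin 2 →₀ ℕ) :
    wt w m ≤ (m 0 + m 1 : ℝ) * simplexWt w := by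
  rw [wt, add_mul, mul_comm w.1, mul_comm w.2]
  gcongr
  exacts [le_max_left _ _, le_max_right _ _]

section MaxWt

variable {A : Finset (Fin 2 →₀ ℕ)} {w : ℝ × ℝ}

lemma wt_le_maxWt {m : Fin 2 →₀ ℕ} (hm : m ∈ A) : wt w m ≤ maxWt A w :=
  le_csSup (A.finite_toSet.image _).bddAbove ⟨m, hm, rfl⟩

lemma exists_wt_eq_maxWt (w : ℝ × ℝ) (hA : A.Nonempty) : ∃ m ∈ A, wt w m = maxWt A w :=
  ((Finset.coe_nonempty.2 hA).image (wt w)).csSup_mem (A.finite_toSet.image _)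

lemma maxWt_le_iff (hA : A.Nonempty) {c : ℝ} : maxWt A w ≤ c ↔ ∀ m ∈ A, wt w m ≤ c := by
  refine ⟨fun h m hm => (wt_le_maxWt hm).trans h, fun h => ?_⟩
  obtain ⟨m, hm, hmw⟩ := exists_wt_eq_maxWt w hA
  exact hmw ▸ h m hm

lemma MeetsAxes.nonempty (hA : MeetsAxes A) : A.Nonempty :=
  let ⟨a, ha⟩ := hA.1
  ⟨Finsupp.single 0 a, ha⟩

lemma MeetsAxes.maxWt_nonneg (hA : MeetsAxes A) (hw : IsOutward w) : 0 ≤ maxWt A w := by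
  obtain ⟨⟨a, ha⟩, b, hb⟩ := hA
  rcases hw with h | h
  · exact (show 0 ≤ wt w _ by rw [wt_single_zero]; positivity).trans (wt_le_maxWt ha)
  · exact (show 0 ≤ wt w _ by rw [wt_single_one]; positivity).trans (wt_le_maxWt hb)

end MaxWt

/-! ### Newton diagrams and their supporting half-planes -/

section Polygon

variable {A : Finset (Fin 2 →₀ ℕ)} {h h' : ℝ × ℝ → ℝ}

/-- The extension of the weight `wt w` to a linear functional on the plane. -/
def wtFunctional (w : ℝ × ℝ) : ℝ × ℝ →L[ℝ] ℝ :=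
  w.1 • ContinuousLinearMap.fst ℝ ℝ ℝ + w.2 • ContinuousLinearMap.snd ℝ ℝ ℝ

lemma exists_wtFunctional_eq (l : ℝ × ℝ →L[ℝ] ℝ) : ∃ w, wtFunctional w = l :=
  ⟨(l (1, 0), l (0, 1)), by ext <;> simp [wtFunctional]⟩

/-- The part of the closed first quadrant cut out by the half-planes `⟨w, x⟩ ≤ h w` for all
outward `w`. -/
def polygon (h : ℝ × ℝ → ℝ) : Set (ℝ × ℝ) :=
  {x | 0 ≤ x ∧ ∀ w, IsOutward w → wtFunctional w x ≤ h w}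

lemma polygon_mono (hh : ∀ w, IsOutward w → h w ≤ h' w) : polygon h ⊆ polygon h' :=
  fun _ hx => ⟨hx.1, fun w hw => (hx.2 w hw).trans (hh w hw)⟩

lemma polygon_smul {r : ℝ} (hr : 0 < r) (h : ℝ × ℝ → ℝ) : polygon (r • h) = r • polygon h := by
  ext x
  rw [Set.mem_smul_set_iff_inv_smul_mem₀ hr.ne']
  simp only [polygon, Set.mem_ofPred_eq, map_smul, Pi.smul_apply, smul_eq_mul,
    inv_mul_le_iff₀ hr, smul_nonneg_iff_nonneg_of_pos_left (inv_pos.2 hr)]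

lemma isCompact_newtonHull (A : Finset (Fin 2 →₀ ℕ)) : IsCompact (newtonHull A) := by
  have himage : {p : ℝ × ℝ | ∃ m ∈ A, p = ((m 0 : ℝ), (m 1 : ℝ))} =
      (fun m : Fin 2 →₀ ℕ => ((m 0 : ℝ), (m 1 : ℝ))) '' A := by
    ext p
    exact exists_congr fun m => and_congr_right fun _ => eq_comm
  refine ((Set.finite_singleton _).union ?_).isCompact_convexHull ℝ
  exact himage ▸ A.finite_toSet.image _

lemma convex_newtonHull (A : Finset (Fin 2 →₀ ℕ)) : Convex ℝ (newtonHull A) :=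
  convex_convexHull _ _

lemma zero_mem_newtonHull (A : Finset (Fin 2 →₀ ℕ)) : (0 : ℝ × ℝ) ∈ newtonHull A :=
  subset_convexHull _ _ (Or.inl rfl)

lemma mem_newtonHull {m : Fin 2 →₀ ℕ} (hm : m ∈ A) : ((m 0 : ℝ), (m 1 : ℝ)) ∈ newtonHull A :=
  subset_convexHull _ _ (Or.inr ⟨m, hm, rfl⟩)

lemma newtonHull_subset_Ici (A : Finset (Fin 2 →₀ ℕ)) : newtonHull A ⊆ Set.Ici 0 := by
  refine convexHull_min ?_ (convex_Ici 0)
  rintro _ (rfl | ⟨m, _, rfl⟩)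
  · exact Set.self_mem_Ici
  · exact ⟨Nat.cast_nonneg _, Nat.cast_nonneg _⟩

lemma polygon_eq_inter_iInter (h : ℝ × ℝ → ℝ) :
    polygon h = Set.Ici 0 ∩ ⋂ (w) (_ : IsOutward w), {x | wtFunctional w x ≤ h w} := by
  ext x
  simp [polygon]

lemma convex_polygon (h : ℝ × ℝ → ℝ) : Convex ℝ (polygon h) := by
  rw [polygon_eq_inter_iInter]
  exact (convex_Ici 0).inter <| convex_iInter₂ fun w _ =>
    convex_halfSpace_le (wtFunctional w).toLinearMap.isLinear _

lemma isCompact_polygon (h : ℝ × ℝ → ℝ) : IsCompact (polygon h) := by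
  have hclosed : IsClosed (polygon h) := by
    rw [polygon_eq_inter_iInter]
    exact isClosed_Ici.inter <| isClosed_iInter fun w => isClosed_iInter fun _ =>
      isClosed_le (wtFunctional w).continuous continuous_const
  refine (isCompact_Icc (a := 0) (b := (h (1, 1), h (1, 1)))).of_isClosed_subset hclosed ?_
  rintro x ⟨⟨hx₁, hx₂⟩, hx⟩
  have hsum : x.1 + x.2 ≤ h (1, 1) := by
    simpa [wtFunctional] using hx (1, 1) (Or.inl one_pos)
  exact ⟨⟨hx₁, hx₂⟩, (le_add_of_nonneg_right hx₂).trans hsum,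
    (le_add_of_nonneg_left hx₁).trans hsum⟩

lemma MeetsAxes.newtonHull_subset_polygon (hA : MeetsAxes A) :
    newtonHull A ⊆ polygon (maxWt A) := by
  refine convexHull_min ?_ (convex_polygon _)
  rintro _ (rfl | ⟨m, hm, rfl⟩)
  · exact ⟨le_rfl, fun w hw => by simpa [wtFunctional] using hA.maxWt_nonneg hw⟩
  · exact ⟨⟨Nat.cast_nonneg _, Nat.cast_nonneg _⟩, fun w _ => wt_le_maxWt hm⟩

lemma wtFunctional_add_mul_simplexWt_lt {w : ℝ × ℝ} {S : Set (ℝ × ℝ)} {ε u : ℝ} (hε : 0 ≤ ε)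
    (hu : ∀ y ∈ Metric.cthickening ε S, wtFunctional w y < u) {x : ℝ × ℝ} (hx : x ∈ S) :
    wtFunctional w x + ε * simplexWt w < u := by
  have shift_mem (v : ℝ × ℝ) (hv : ‖v‖ ≤ 1) : x + ε • v ∈ Metric.cthickening ε S := by
    refine Metric.mem_cthickening_of_dist_le _ x ε S hx ?_
    rw [dist_self_add_left, norm_smul, Real.norm_of_nonneg hε]
    exact mul_le_of_le_one_right hε hv
  rcases max_choice w.1 w.2 with hmax | hmax <;> rw [simplexWt, hmax]
  · simpa [wtFunctional, mul_add, add_right_comm, mul_comm] using hu _ (shift_mem (1, 0) (by simp))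
  · simpa [wtFunctional, mul_add, add_assoc, mul_comm] using hu _ (shift_mem (0, 1) (by simp))

lemma polygon_subset_cthickening_newtonHull (hA : A.Nonempty) {ε : ℝ} (hε : 0 ≤ ε) :
    polygon (maxWt A + ε • simplexWt) ⊆ Metric.cthickening ε (newtonHull A) := by
  intro x hx
  by_contra hxK
  obtain ⟨l, u, hu, hux⟩ := geometric_hahn_banach_closed_point
    ((convex_newtonHull A).cthickening ε) Metric.isClosed_cthickening hxK
  obtain ⟨w, rfl⟩ := exists_wtFunctional_eq l
  have hu_pos : 0 < u := by
    simpa using hu 0 (Metric.self_subset_cthickening _ (zero_mem_newtonHull A))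
  have hw : IsOutward w := by
    by_contra hw
    rw [IsOutward, not_or, not_lt, not_lt] at hw
    have hx_nonpos : wtFunctional w x ≤ 0 := add_nonpos
      (mul_nonpos_of_nonpos_of_nonneg hw.1 hx.1.1) (mul_nonpos_of_nonpos_of_nonneg hw.2 hx.1.2)
    linarith
  obtain ⟨m, hm, hmw⟩ := exists_wt_eq_maxWt w hA
  have htop : wt w m + ε * simplexWt w < u :=
    wtFunctional_add_mul_simplexWt_lt hε hu (mem_newtonHull hm)
  have hx_le : wtFunctional w x ≤ maxWt A w + ε * simplexWt w := hx.2 w hw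
  linarith

end Polygon

/-! ### Counting lattice points -/

section LatticePoints

open Filter Topology

/-- The lattice points of `K` with nonnegative coordinates, as exponents of monomials. -/
def exponentsIn (K : Set (ℝ × ℝ)) : Set (Fin 2 →₀ ℕ) :=
  {m | ((m 0 : ℝ), (m 1 : ℝ)) ∈ K}

/-- The number of lattice points of `polygon h`. -/
def latticeCount (h : ℝ × ℝ → ℝ) : ℕ := (exponentsIn (polygon h)).ncard

lemma mem_exponentsIn_polygon {h : ℝ × ℝ → ℝ} {m : Fin 2 →₀ ℕ} :
    m ∈ exponentsIn (polygon h) ↔ ∀ w, IsOutward w → wt w m ≤ h w :=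
  and_iff_right ⟨Nat.cast_nonneg _, Nat.cast_nonneg _⟩

lemma finite_exponentsIn {K : Set (ℝ × ℝ)} (hK : Bornology.IsBounded K) :
    (exponentsIn K).Finite := by
  obtain ⟨r, hr⟩ := hK.exists_norm_le
  refine (Set.finite_Iic (Finsupp.equivFunOnFinite.symm fun _ : Fin 2 => ⌈r⌉₊)).subset ?_
  intro m hm
  obtain ⟨h₀, h₁⟩ := max_le_iff.1 (hr _ hm)
  simp only [Real.norm_natCast] at h₀ h₁
  exact Fin.forall_fin_two.2 ⟨Nat.cast_le.1 (h₀.trans (Nat.le_ceil r)),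
    Nat.cast_le.1 (h₁.trans (Nat.le_ceil r))⟩

lemma ncard_exponentsIn_mono {K K' : Set (ℝ × ℝ)} (hKK' : K ⊆ K')
    (hK' : Bornology.IsBounded K') : (exponentsIn K).ncard ≤ (exponentsIn K').ncard :=
  Set.ncard_le_ncard (fun _ hm => hKK' hm) (finite_exponentsIn hK')

lemma ncard_exponentsIn_smul {K : Set (ℝ × ℝ)} (hK : K ⊆ Set.Ici 0) {N : ℕ} (hN : 0 < N) :
    (exponentsIn ((N : ℝ) • K)).ncard =
      (ContinuousLinearEquiv.finTwoArrow ℝ ℝ ⁻¹' K ∩ (N : ℝ)⁻¹ •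
        (Submodule.span ℤ (Set.range (Pi.basisFun ℝ (Fin 2))) : Set (Fin 2 → ℝ))).ncard := by
  have hN₀ : (N : ℝ) ≠ 0 := Nat.cast_ne_zero.2 hN.ne'
  have : NeZero N := ⟨hN.ne'⟩
  let scale (m : Fin 2 →₀ ℕ) (i : Fin 2) : ℝ := (N : ℝ)⁻¹ * m i
  have scale_injective : Function.Injective scale := fun m n hmn => Finsupp.ext fun i =>
    Nat.cast_injective (mul_left_cancel₀ (inv_ne_zero hN₀) (congrFun hmn i))
  have mem_iff (m : Fin 2 →₀ ℕ) : m ∈ exponentsIn ((N : ℝ) • K) ↔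
      scale m ∈ ContinuousLinearEquiv.finTwoArrow ℝ ℝ ⁻¹' K :=
    Set.mem_smul_set_iff_inv_smul_mem₀ hN₀ K _
  rw [← Set.ncard_image_of_injective _ scale_injective]
  congr 1
  ext v
  rw [← Submodule.coe_pointwise_smul, Set.mem_inter_iff, SetLike.mem_coe,
    BoxIntegral.unitPartition.mem_smul_span_iff]
  constructor
  · rintro ⟨m, hm, rfl⟩
    exact ⟨(mem_iff m).1 hm, fun i => ⟨m i, by simp [scale, hN₀]⟩⟩
  · rintro ⟨hv, hlattice⟩
    have hv_nonneg : ∀ i, 0 ≤ v i := Fin.forall_fin_two.2 (hK hv)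
    have hlattice_nat (i : Fin 2) : ∃ k : ℕ, (k : ℝ) = N * v i := by
      obtain ⟨k, hk⟩ := hlattice i
      have hk_nonneg : (0 : ℝ) ≤ k := (mul_nonneg N.cast_nonneg (hv_nonneg i)).trans_eq hk.symm
      lift k to ℕ using Int.cast_nonneg_iff.1 hk_nonneg
      exact ⟨k, hk⟩
    choose k hk using hlattice_nat
    have hscale : scale (Finsupp.equivFunOnFinite.symm k) = v :=
      funext fun i => (inv_mul_eq_iff_eq_mul₀ hN₀).2 (hk i)
    exact ⟨_, (mem_iff _).2 (hscale.symm ▸ hv), hscale⟩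

lemma tendsto_ncard_exponentsIn_smul_div_sq {K : Set (ℝ × ℝ)} (hK : IsCompact K)
    (hconvex : Convex ℝ K) (hK₀ : K ⊆ Set.Ici 0) :
    Tendsto (fun N : ℕ => ((exponentsIn ((N : ℝ) • K)).ncard : ℝ) / N ^ 2) atTop
      (𝓝 (area K)) := by
  let e := ContinuousLinearEquiv.finTwoArrow ℝ ℝ
  have hcompact : IsCompact (e ⁻¹' K) := e.toHomeomorph.isCompact_preimage.2 hK
  have hvolume : volume.real (e ⁻¹' K) = area K :=
    congrArg ENNReal.toReal <| (volume_preserving_finTwoArrow ℝ).measure_preimage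
      hK.measurableSet.nullMeasurableSet
  have hlimit := tendsto_card_div_pow_atTop_volume (e ⁻¹' K) hcompact.isBounded
    hcompact.measurableSet ((hconvex.linear_preimage e.toLinearMap).addHaar_frontier volume)
  rw [hvolume] at hlimit
  refine hlimit.congr' ?_
  filter_upwards [eventually_gt_atTop 0] with N hN
  rw [Fintype.card_fin, ncard_exponentsIn_smul hK₀ hN]
  rfl

lemma le_area_of_forall_le_area_cthickening {K : Set (ℝ × ℝ)} (hK : IsCompact K) {c : ℝ}
    (hc : ∀ δ > 0, c ≤ area (Metric.cthickening δ K)) : c ≤ area K := by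
  have hlimit : Tendsto (fun δ => area (Metric.cthickening δ K)) (𝓝 0) (𝓝 (area K)) :=
    (ENNReal.tendsto_toReal hK.measure_lt_top.ne).comp
      (tendsto_measure_cthickening_of_isCompact hK)
  exact ge_of_tendsto (hlimit.mono_left (nhdsWithin_le_nhds (s := Set.Ioi 0)))
    (eventually_mem_nhdsWithin.mono hc)

end LatticePoints

section Asymptotics

open Filter Topology

variable {A B C : Finset (Fin 2 →₀ ℕ)} {d t N : ℕ}

lemma MeetsAxes.ncard_smul_newtonHull_le_latticeCount (hA : MeetsAxes A) (hN : 0 < N) (t : ℕ) :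
    (exponentsIn ((N : ℝ) • newtonHull A)).ncard ≤
      latticeCount (t • simplexWt + N • maxWt A) := by
  refine ncard_exponentsIn_mono ?_ (isCompact_polygon _).isBounded
  calc (N : ℝ) • newtonHull A
      ⊆ (N : ℝ) • polygon (maxWt A) := Set.smul_set_mono hA.newtonHull_subset_polygon
    _ = polygon ((N : ℝ) • maxWt A) := (polygon_smul (Nat.cast_pos.2 hN) _).symm
    _ ⊆ polygon (t • simplexWt + N • maxWt A) := polygon_mono fun w hw => by
      simpa using mul_nonneg t.cast_nonneg hw.simplexWt_nonneg

lemma latticeCount_le_ncard_exponentsIn_smul {h : ℝ × ℝ → ℝ} {δ : ℝ} (hN : 0 < N)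
    (htN : t ≤ N * δ) :
    latticeCount (t • simplexWt + N • h) ≤
      (exponentsIn ((N : ℝ) • polygon (h + δ • simplexWt))).ncard := by
  rw [← polygon_smul (Nat.cast_pos.2 hN)]
  refine ncard_exponentsIn_mono (polygon_mono fun w hw => ?_) (isCompact_polygon _).isBounded
  calc t • simplexWt w + N • h w
      = t * simplexWt w + N * h w := by simp only [nsmul_eq_mul]
    _ ≤ N * δ * simplexWt w + N * h w := by
      gcongr
      exact hw.simplexWt_nonneg
    _ = N * (h w + δ * simplexWt w) := by ring

lemma area_polygon_le_area_cthickening (hC : C.Nonempty) {δ : ℝ} (hδ : 0 ≤ δ) :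
    area (polygon (maxWt C + δ • simplexWt)) ≤ area (Metric.cthickening δ (newtonHull C)) :=
  ENNReal.toReal_mono (isCompact_newtonHull C).cthickening.measure_lt_top.ne
    (measure_mono (polygon_subset_cthickening_newtonHull hC hδ))

lemma add_area_newtonHull_le_area_polygon (hA : MeetsAxes A) (hB : MeetsAxes B)
    (hcount : ∀ N : ℕ,
      N ^ 2 * d + latticeCount (t • simplexWt + N • maxWt A) +
          latticeCount (t • simplexWt + N • maxWt B) ≤
        latticeCount (t • simplexWt + N • (maxWt A + maxWt B)) +
          latticeCount (t • simplexWt)) {δ : ℝ} (hδ : 0 < δ) :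
    d + area (newtonHull A) + area (newtonHull B) ≤
      area (polygon (maxWt A + maxWt B + δ • simplexWt)) := by
  have limit_newtonHull (A : Finset (Fin 2 →₀ ℕ)) := tendsto_ncard_exponentsIn_smul_div_sq
    (isCompact_newtonHull A) (convex_newtonHull A) (newtonHull_subset_Ici A)
  have limit_polygon := tendsto_ncard_exponentsIn_smul_div_sq
    (isCompact_polygon (maxWt A + maxWt B + δ • simplexWt)) (convex_polygon _) fun _ hx => hx.1
  have limit_const : Tendsto (fun N : ℕ =>
      (latticeCount (t • simplexWt) : ℝ) / N ^ 2) atTop (𝓝 0) :=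
    tendsto_const_nhds.div_atTop <|
      (tendsto_pow_atTop two_ne_zero).comp tendsto_natCast_atTop_atTop
  refine (le_of_tendsto_of_tendsto ((tendsto_const_nhds.add (limit_newtonHull A)).add
    (limit_newtonHull B)) (limit_polygon.add limit_const) ?_).trans_eq (add_zero _)
  have htN : ∀ᶠ N : ℕ in atTop, (t : ℝ) ≤ N * δ :=
    (tendsto_natCast_atTop_atTop.atTop_mul_const hδ).eventually_ge_atTop _
  filter_upwards [eventually_gt_atTop 0, htN] with N hN htN
  have hN₂ : (0 : ℝ) < N ^ 2 := by positivity
  rw [← add_div, le_div_iff₀ hN₂, add_mul, add_mul, div_mul_cancel₀ _ hN₂.ne',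
    div_mul_cancel₀ _ hN₂.ne', mul_comm (d : ℝ)]
  exact_mod_cast calc
    _ ≤ _ := add_le_add (add_le_add le_rfl (hA.ncard_smul_newtonHull_le_latticeCount hN t))
      (hB.ncard_smul_newtonHull_le_latticeCount hN t)
    _ ≤ _ := hcount N
    _ ≤ _ := add_le_add (latticeCount_le_ncard_exponentsIn_smul hN htN) le_rfl

theorem le_area_newtonHull_sub_of_forall_latticeCount_le (hA : MeetsAxes A) (hB : MeetsAxes B)
    (hC : C.Nonempty) (hABC : maxWt C = maxWt A + maxWt B)
    (hcount : ∀ N : ℕ,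
      N ^ 2 * d + latticeCount (t • simplexWt + N • maxWt A) +
          latticeCount (t • simplexWt + N • maxWt B) ≤
        latticeCount (t • simplexWt + N • (maxWt A + maxWt B)) +
          latticeCount (t • simplexWt)) :
    d ≤ area (newtonHull C) - area (newtonHull A) - area (newtonHull B) := by
  have hbound : d + area (newtonHull A) + area (newtonHull B) ≤ area (newtonHull C) :=
    le_area_of_forall_le_area_cthickening (isCompact_newtonHull C) fun δ hδ =>
      (hABC ▸ add_area_newtonHull_le_area_polygon hA hB hcount hδ).trans
        (area_polygon_le_area_cthickening hC hδ.le)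
  linarith

end Asymptotics

/-! ### Polynomials with exponents in a polygon -/

section UniqueTop

variable {A B : Finset (Fin 2 →₀ ℕ)}

lemma exists_uniqueAdd_wt_eq_maxWt (w : ℝ × ℝ) (hA : A.Nonempty) (hB : B.Nonempty) :
    ∃ m ∈ A, ∃ n ∈ B, wt w m = maxWt A w ∧ wt w n = maxWt B w ∧ UniqueAdd A B m n := by
  classical
  have top_nonempty {A : Finset (Fin 2 →₀ ℕ)} (hA : A.Nonempty) :
      (A.filter (wt w · = maxWt A w)).Nonempty :=
    let ⟨m, hm, hmw⟩ := exists_wt_eq_maxWt w hA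
    ⟨m, Finset.mem_filter.2 ⟨hm, hmw⟩⟩
  obtain ⟨m, hm, n, hn, hunique⟩ :=
    UniqueSums.uniqueAdd_of_nonempty (top_nonempty hA) (top_nonempty hB)
  obtain ⟨hmA, hmw⟩ := Finset.mem_filter.1 hm
  obtain ⟨hnB, hnw⟩ := Finset.mem_filter.1 hn
  refine ⟨m, hmA, n, hnB, hmw, hnw, fun a b ha hb hab => ?_⟩
  have hwt : wt w a + wt w b = maxWt A w + maxWt B w := by
    rw [← wt_add, hab, wt_add, hmw, hnw]
  have haw : wt w a = maxWt A w := by linarith [wt_le_maxWt ha (w := w), wt_le_maxWt hb (w := w)]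
  have hbw : wt w b = maxWt B w := by linarith
  exact hunique (Finset.mem_filter.2 ⟨ha, haw⟩) (Finset.mem_filter.2 ⟨hb, hbw⟩) hab

end UniqueTop

section Support

variable {R : Type*} [CommSemiring R] [NoZeroDivisors R] {f g : MvPolynomial (Fin 2) R}

lemma maxWt_support_mul (hf : f ≠ 0) (hg : g ≠ 0) :
    maxWt (f * g).support = maxWt f.support + maxWt g.support := by
  classical
  funext w
  apply le_antisymm
  · refine (maxWt_le_iff (support_nonempty.2 (mul_ne_zero hf hg))).2 fun m hm => ?_
    obtain ⟨a, ha, b, hb, rfl⟩ := Finset.mem_add.1 (support_mul f g hm)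
    exact (wt_add w a b).trans_le (add_le_add (wt_le_maxWt ha) (wt_le_maxWt hb))
  · obtain ⟨m, hm, n, hn, hmw, hnw, hunique⟩ :=
      exists_uniqueAdd_wt_eq_maxWt w (support_nonempty.2 hf) (support_nonempty.2 hg)
    have hcoeff : coeff (m + n) (f * g) = coeff m f * coeff n g :=
      AddMonoidAlgebra.coeff_mul_add_of_uniqueAdd hunique
    have hmn : m + n ∈ (f * g).support := by
      rw [mem_support_iff, hcoeff]
      exact mul_ne_zero (mem_support_iff.1 hm) (mem_support_iff.1 hn)
    calc maxWt f.support w + maxWt g.support w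
        = wt w (m + n) := by rw [wt_add, hmw, hnw]
      _ ≤ maxWt (f * g).support w := wt_le_maxWt hmn

end Support

section PolysBelow

variable {K : Type*} [Field K] {h : ℝ × ℝ → ℝ} {f p : MvPolynomial (Fin 2) K}

variable (K h) in
/-- The polynomials all of whose exponents lie in `polygon h`. -/
abbrev polysBelow : Submodule K (MvPolynomial (Fin 2) K) :=
  restrictSupport K (exponentsIn (polygon h))

lemma mem_polysBelow_iff (hp : p ≠ 0) :
    p ∈ polysBelow K h ↔ ∀ w, IsOutward w → maxWt p.support w ≤ h w := by
  simp only [mem_restrictSupport_iff, Set.subset_def, Finset.mem_coe, mem_exponentsIn_polygon,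
    maxWt_le_iff (support_nonempty.2 hp)]
  tauto

lemma mul_mem_polysBelow_iff (hf : f ≠ 0) :
    f * p ∈ polysBelow K (maxWt f.support + h) ↔ p ∈ polysBelow K h := by
  rcases eq_or_ne p 0 with rfl | hp
  · simp only [mul_zero, zero_mem]
  · simp only [mem_polysBelow_iff hp, mem_polysBelow_iff (mul_ne_zero hf hp),
      maxWt_support_mul hf hp, Pi.add_apply, add_le_add_iff_left]

lemma mem_polysBelow_of_totalDegree_le {t : ℕ} (hp : p.totalDegree ≤ t)
    (hh : ∀ w, IsOutward w → t * simplexWt w ≤ h w) : p ∈ polysBelow K h := by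
  intro m hm
  refine mem_exponentsIn_polygon.2 fun w hw => ?_
  have hdegree : (m 0 + m 1 : ℝ) ≤ t := by
    have := (le_totalDegree hm).trans hp
    rw [Finsupp.sum_fintype _ _ fun _ => rfl, Fin.sum_univ_two] at this
    exact_mod_cast this
  calc wt w m ≤ (m 0 + m 1) * simplexWt w := wt_le_degree_mul_simplexWt w m
    _ ≤ t * simplexWt w := mul_le_mul_of_nonneg_right hdegree hw.simplexWt_nonneg
    _ ≤ h w := hh w hw

instance : Module.Finite K (polysBelow K h) :=
  have := (finite_exponentsIn (isCompact_polygon h).isBounded).to_subtype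
  Module.Finite.of_basis (basisRestrictSupport K (exponentsIn (polygon h)))

lemma finrank_polysBelow : Module.finrank K (polysBelow K h) = latticeCount h :=
  Module.finrank_eq_nat_card_basis (basisRestrictSupport K (exponentsIn (polygon h)))

end PolysBelow

/-! ### The Koszul inequality -/

lemma nsmul_add_le_of_forall_add_le {M : Type*} [AddCommMonoid M] [PartialOrder M]
    [IsOrderedCancelAddMonoid M] {u v : ℕ → M} {d : M}
    (huv : ∀ i, d + u i + v (i + 1) ≤ u (i + 1) + v i) (n : ℕ) :
    n • d + u 0 + v n ≤ u n + v 0 := by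
  induction n with
  | zero => rw [zero_nsmul, zero_add]
  | succ n ih =>
    refine le_of_add_le_add_right (a := v n) ?_
    calc (n + 1) • d + u 0 + v (n + 1) + v n
        = (n • d + u 0 + v n) + (d + v (n + 1)) := by rw [succ_nsmul]; abel
      _ ≤ (u n + v 0) + (d + v (n + 1)) := by gcongr
      _ = (d + u n + v (n + 1)) + v 0 := by abel
      _ ≤ (u (n + 1) + v n) + v 0 := add_le_add (huv n) le_rfl
      _ = u (n + 1) + v 0 + v n := by abel

lemma mul_nsmul_add_le_of_forall_add_le {M : Type*} [AddCommMonoid M] [PartialOrder M]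
    [IsOrderedCancelAddMonoid M] {s : ℕ → ℕ → M} {d : M}
    (hs : ∀ i j, d + s i (j + 1) + s (i + 1) j ≤ s (i + 1) (j + 1) + s i j) (a b : ℕ) :
    (a * b) • d + s a 0 + s 0 b ≤ s a b + s 0 0 := by
  rw [mul_nsmul]
  refine nsmul_add_le_of_forall_add_le (u := s a) (v := s 0) (fun j => ?_) b
  rw [add_right_comm]
  exact nsmul_add_le_of_forall_add_le (u := (s · (j + 1))) (v := (s · j)) (hs · j) a

lemma finrank_map_add_finrank_le {K E V : Type*} [Field K] [AddCommGroup E] [Module K E]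
    [AddCommGroup V] [Module K V] {φ : E →ₗ[K] V} {M W : Submodule K E} [Module.Finite K M]
    (hWM : W ≤ M) (hW : W ≤ LinearMap.ker φ) :
    Module.finrank K (M.map φ) + Module.finrank K W ≤ Module.finrank K M := by
  have hker : W ≤ (LinearMap.ker (φ.domRestrict M)).map M.subtype :=
    fun x hx => ⟨⟨x, hWM hx⟩, hW hx, rfl⟩
  calc Module.finrank K (M.map φ) + Module.finrank K W
      ≤ Module.finrank K (LinearMap.range (φ.domRestrict M)) +
          Module.finrank K (LinearMap.ker (φ.domRestrict M)) := by
        rw [LinearMap.range_domRestrict]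
        exact add_le_add le_rfl ((Submodule.finrank_mono hker).trans (Submodule.finrank_map_le _ _))
    _ = Module.finrank K M := LinearMap.finrank_range_add_finrank_ker _

section Koszul

variable {K R V : Type*} [Field K] [CommRing R] [IsDomain R] [Algebra K R] [AddCommGroup V]
  [Module K V]

lemma finrank_map_mulLeft {f : R} (hf : f ≠ 0) (M : Submodule K R) :
    Module.finrank K (M.map (LinearMap.mulLeft K f)) = Module.finrank K M :=
  (Submodule.equivMapOfInjective _ (mul_right_injective₀ hf) M).finrank_eq.symm

/-- A numerical form of the exactness of the Koszul complex `0 → R → R² → R` of a relatively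
prime pair: the syzygies `f * p = g * q` are the multiples of `(g, f)`. -/
theorem finrank_map_add_le_of_isRelPrime [DecompositionMonoid R] {f g : R} (hf : f ≠ 0)
    (hg : g ≠ 0) (hfg : IsRelPrime f g) {φ : R →ₗ[K] V} (hφf : ∀ p, φ (f * p) = 0)
    (hφg : ∀ p, φ (g * p) = 0) {M₀₀ M₀₁ M₁₀ M₁₁ : Submodule K R} [Module.Finite K M₀₀]
    [Module.Finite K M₀₁] [Module.Finite K M₁₀] [Module.Finite K M₁₁]
    (hf_mem : ∀ p ∈ M₀₁, f * p ∈ M₁₁) (hg_mem : ∀ q ∈ M₁₀, g * q ∈ M₁₁)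
    (hmem_of_g : ∀ r, g * r ∈ M₀₁ → r ∈ M₀₀) :
    Module.finrank K (M₁₁.map φ) + Module.finrank K M₀₁ + Module.finrank K M₁₀ ≤
      Module.finrank K M₁₁ + Module.finrank K M₀₀ := by
  let F := M₀₁.map (LinearMap.mulLeft K f)
  let G := M₁₀.map (LinearMap.mulLeft K g)
  have hinf : F ⊓ G ≤ M₀₀.map (LinearMap.mulLeft K (f * g)) := by
    rintro _ ⟨⟨p, hp, rfl⟩, q, _, hq : g * q = f * p⟩
    obtain ⟨r, rfl⟩ := hfg.symm.dvd_of_dvd_mul_left (Dvd.intro q hq)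
    exact ⟨r, hmem_of_g r hp, mul_assoc f g r⟩
  have hF : F ≤ M₁₁ ⊓ LinearMap.ker φ := by
    rintro _ ⟨p, hp, rfl⟩
    exact ⟨hf_mem p hp, hφf p⟩
  have hG : G ≤ M₁₁ ⊓ LinearMap.ker φ := by
    rintro _ ⟨q, hq, rfl⟩
    exact ⟨hg_mem q hq, hφg q⟩
  have hsup := finrank_map_add_finrank_le ((sup_le hF hG).trans inf_le_left)
    ((sup_le hF hG).trans inf_le_right)
  have hsum : Module.finrank K (F ⊔ G : Submodule K R) + Module.finrank K (F ⊓ G : Submodule K R) =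
      Module.finrank K M₀₁ + Module.finrank K M₁₀ := by
    rw [Submodule.finrank_sup_add_finrank_inf_eq, finrank_map_mulLeft hf, finrank_map_mulLeft hg]
  have hinter := (Submodule.finrank_mono hinf).trans_eq (finrank_map_mulLeft (mul_ne_zero hf hg) _)
  omega

end Koszul

section GlobalBound

variable {K : Type*} [Field K] {f g : MvPolynomial (Fin 2) K}

lemma MeetsAxes.ne_zero (hf : MeetsAxes f.support) : f ≠ 0 :=
  support_nonempty.1 hf.nonempty

lemma exists_le_map_polysBelow {V : Type*} [AddCommGroup V] [Module K V]
    {φ : MvPolynomial (Fin 2) K →ₗ[K] V} (hφ : Function.Surjective φ) (s : Finset V) :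
    ∃ t : ℕ, ∀ h : ℝ × ℝ → ℝ, (∀ w, IsOutward w → t * simplexWt w ≤ h w) →
      Submodule.span K (s : Set V) ≤ (polysBelow K h).map φ := by
  obtain ⟨lift, hlift⟩ := hφ.hasRightInverse
  refine ⟨s.sup fun v => (lift v).totalDegree, fun h hh => Submodule.span_le.2 fun v hv => ?_⟩
  exact ⟨lift v, mem_polysBelow_of_totalDegree_le
    (Finset.le_sup (f := fun v => (lift v).totalDegree) hv) hh, hlift v⟩

lemma finrank_map_polysBelow_add_le (hf : f ≠ 0) (hg : g ≠ 0) (hfg : IsRelPrime f g) {V : Type*}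
    [AddCommGroup V] [Module K V] {φ : MvPolynomial (Fin 2) K →ₗ[K] V}
    (hφf : ∀ p, φ (f * p) = 0) (hφg : ∀ p, φ (g * p) = 0) (h : ℝ × ℝ → ℝ) :
    Module.finrank K ((polysBelow K (maxWt f.support + (maxWt g.support + h))).map φ) +
        latticeCount (maxWt g.support + h) + latticeCount (maxWt f.support + h) ≤
      latticeCount (maxWt f.support + (maxWt g.support + h)) + latticeCount h := by
  simp only [← finrank_polysBelow (K := K)]
  refine finrank_map_add_le_of_isRelPrime hf hg hfg hφf hφg
    (fun p => (mul_mem_polysBelow_iff hf).2) (fun q hq => ?_)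
    (fun r => (mul_mem_polysBelow_iff hg).1)
  rw [add_left_comm]
  exact (mul_mem_polysBelow_iff hg).2 hq

lemma sq_mul_finrank_add_latticeCount_le (hf : MeetsAxes f.support) (hg : MeetsAxes g.support)
    (hfg : IsRelPrime f g) {V : Type*} [AddCommGroup V] [Module K V]
    {φ : MvPolynomial (Fin 2) K →ₗ[K] V} (hφf : ∀ p, φ (f * p) = 0) (hφg : ∀ p, φ (g * p) = 0)
    {W : Submodule K V} {t : ℕ} (hW : ∀ h : ℝ × ℝ → ℝ,
      (∀ w, IsOutward w → t * simplexWt w ≤ h w) → W ≤ (polysBelow K h).map φ) (N : ℕ) :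
    N ^ 2 * Module.finrank K W + latticeCount (t • simplexWt + N • maxWt f.support) +
        latticeCount (t • simplexWt + N • maxWt g.support) ≤
      latticeCount (t • simplexWt + N • (maxWt f.support + maxWt g.support)) +
        latticeCount (t • simplexWt) := by
  let b (i j : ℕ) : ℝ × ℝ → ℝ := t • simplexWt + i • maxWt f.support + j • maxWt g.support
  have hW_le (i j : ℕ) : W ≤ (polysBelow K (b i j)).map φ := by
    refine hW _ fun w hw => ?_
    have hf_nonneg := mul_nonneg i.cast_nonneg (hf.maxWt_nonneg hw)
    have hg_nonneg := mul_nonneg j.cast_nonneg (hg.maxWt_nonneg hw)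
    calc t * simplexWt w
        ≤ t * simplexWt w + i * maxWt f.support w + j * maxWt g.support w := by linarith
      _ = b i j w := by simp [b]
  have hkoszul (i j : ℕ) : Module.finrank K W + latticeCount (b i (j + 1)) +
      latticeCount (b (i + 1) j) ≤ latticeCount (b (i + 1) (j + 1)) + latticeCount (b i j) := by
    have hb_f (i j) : b (i + 1) j = maxWt f.support + b i j := by
      simp only [b, succ_nsmul]
      abel
    have hb_g (i j) : b i (j + 1) = maxWt g.support + b i j := by
      simp only [b, succ_nsmul]
      abel
    have hrank := Submodule.finrank_mono (hW_le (i + 1) (j + 1))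
    have := finrank_map_polysBelow_add_le hf.ne_zero hg.ne_zero hfg hφf hφg (b i j)
    rw [← hb_g, ← hb_f, ← hb_f] at this
    omega
  simpa [b, sq, add_assoc] using
    mul_nsmul_add_le_of_forall_add_le (s := fun i j => latticeCount (b i j)) hkoszul N N

lemma finrank_span_le_area_sub (hf : MeetsAxes f.support) (hg : MeetsAxes g.support)
    (hfg : IsRelPrime f g)
    (s : Finset (MvPolynomial (Fin 2) K ⧸ Ideal.span {f, g})) :
    (Module.finrank K (Submodule.span K (s : Set (MvPolynomial (Fin 2) K ⧸ Ideal.span {f, g}))) :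
      ℝ) ≤ area (newtonHull (f * g).support) - area (newtonHull f.support) -
        area (newtonHull g.support) := by
  let φ := (Ideal.Quotient.mkₐ K (Ideal.span {f, g})).toLinearMap
  have hφ {q : MvPolynomial (Fin 2) K} (hq : q ∈ ({f, g} : Set _)) (p) : φ (q * p) = 0 :=
    Ideal.Quotient.eq_zero_iff_mem.2 (Ideal.mul_mem_right _ _ (Ideal.subset_span hq))
  obtain ⟨t, ht⟩ := exists_le_map_polysBelow (φ := φ) Ideal.Quotient.mk_surjective s
  exact le_area_newtonHull_sub_of_forall_latticeCount_le hf hg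
    (support_nonempty.2 (mul_ne_zero hf.ne_zero hg.ne_zero))
    (maxWt_support_mul hf.ne_zero hg.ne_zero)
    (sq_mul_finrank_add_latticeCount_le hf hg hfg (hφ (by simp)) (hφ (by simp)) ht)

lemma finite_and_finrank_le_of_forall_finrank_span_le {V : Type*} [AddCommGroup V] [Module K V]
    {c : ℝ} (hc : ∀ s : Finset V, (Module.finrank K (Submodule.span K (s : Set V)) : ℝ) ≤ c) :
    Module.Finite K V ∧ (Module.finrank K V : ℝ) ≤ c := by
  have hrank : Module.rank K V ≤ ⌊c⌋₊ := rank_le fun s hs => by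
    rw [← finrank_span_finset_eq_card hs]
    exact Nat.le_floor (hc s)
  have hfinite : Module.Finite K V :=
    Module.rank_lt_aleph0_iff.1 (hrank.trans_lt Cardinal.natCast_lt_aleph0)
  obtain ⟨s, hs⟩ := hfinite.fg_top
  refine ⟨hfinite, ?_⟩
  rw [← finrank_top, ← hs]
  exact hc s

theorem finite_quotient_and_finrank_le_area_sub (hf : MeetsAxes f.support)
    (hg : MeetsAxes g.support) (hfg : IsRelPrime f g) :
    Module.Finite K (MvPolynomial (Fin 2) K ⧸ Ideal.span {f, g}) ∧
      (Module.finrank K (MvPolynomial (Fin 2) K ⧸ Ideal.span {f, g}) : ℝ) ≤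
        area (newtonHull (f * g).support) - area (newtonHull f.support) -
          area (newtonHull g.support) :=
  finite_and_finrank_le_of_forall_finrank_span_le (finrank_span_le_area_sub hf hg hfg)

end GlobalBound

/-! ### From the affine plane to its local rings -/

section LocalRings

variable {R : Type*} [CommRing R]

lemma eq_of_isMaximal_of_ker_le {B : Type*} [CommRing B] {φ : R →+* B}
    (hφ : Function.Surjective φ) {p M : Ideal R} [p.IsPrime] (hunit : ∀ x ∉ p, IsUnit (φ x))
    (hM : M.IsMaximal) (hker : RingHom.ker φ ≤ M) : M = p := by
  refine hM.eq_of_le (Ideal.IsPrime.ne_top inferInstance) fun x hx => ?_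
  by_contra hxp
  obtain ⟨b, hb⟩ := (hunit x hxp).exists_right_inv
  obtain ⟨r, rfl⟩ := hφ b
  have hxr : x * r - 1 ∈ M :=
    hker (by rw [RingHom.mem_ker, map_sub, map_mul, hb, map_one, sub_self])
  refine hM.ne_top ((Ideal.eq_top_iff_one M).2 ?_)
  exact (Submodule.sub_mem_iff_right M (M.mul_mem_right r hx)).1 hxr

lemma isCoprime_ker_of_ne {B C : Type*} [CommRing B] [CommRing C] {φ : R →+* B} {ψ : R →+* C}
    (hφ : Function.Surjective φ) (hψ : Function.Surjective ψ) {p q : Ideal R} [p.IsPrime]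
    [q.IsPrime] (hpq : p ≠ q) (hφp : ∀ x ∉ p, IsUnit (φ x)) (hψq : ∀ x ∉ q, IsUnit (ψ x)) :
    IsCoprime (RingHom.ker φ) (RingHom.ker ψ) := by
  rw [Ideal.isCoprime_iff_sup_eq]
  by_contra hne_top
  obtain ⟨M, hM, hle⟩ := Ideal.exists_le_maximal _ hne_top
  exact hpq <| (eq_of_isMaximal_of_ker_le hφ hφp hM (le_sup_left.trans hle)).symm.trans <|
    eq_of_isMaximal_of_ker_le hψ hψq hM (le_sup_right.trans hle)

lemma pi_surjective_of_isCoprime_ker {ι : Type*} [Finite ι] {B : ι → Type*}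
    [∀ i, CommRing (B i)] {φ : ∀ i, R →+* B i} (hφ : ∀ i, Function.Surjective (φ i))
    (hcoprime : Pairwise (Function.onFun IsCoprime fun i => RingHom.ker (φ i))) :
    Function.Surjective (RingHom.pi φ) := by
  intro b
  choose r hr using fun i => hφ i (b i)
  obtain ⟨s, hs⟩ := Ideal.pi_quotient_surjective hcoprime fun i => Ideal.Quotient.mk _ (r i)
  refine ⟨s, funext fun i => ?_⟩
  rw [← hr i]
  exact (RingHom.sub_mem_ker_iff _).1 (Ideal.Quotient.eq.1 (hs i))

lemma algebraMap_quotient_map_surjective {I : Ideal R} [IsArtinianRing (R ⧸ I)] (M : Submonoid R)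
    {S : Type*} [CommRing S] [Algebra R S] [IsLocalization M S] :
    Function.Surjective (algebraMap R (S ⧸ I.map (algebraMap R S))) :=
  (IsArtinianRing.localization_surjective (Algebra.algebraMapSubmonoid (R ⧸ I) M)
    (S ⧸ I.map (algebraMap R S))).comp Ideal.Quotient.mk_surjective

theorem sum_finrank_localization_quotient_le (K : Type*) [Field K] [Algebra K R] {I : Ideal R}
    [Module.Finite K (R ⧸ I)] {ι : Type*} {p : ι → Ideal R} [∀ i, (p i).IsPrime]
    (hp : Function.Injective p) (s : Finset ι) :
    ∑ i ∈ s, Module.finrank K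
        (Localization.AtPrime (p i) ⧸ I.map (algebraMap R (Localization.AtPrime (p i)))) ≤
      Module.finrank K (R ⧸ I) := by
  have : IsArtinianRing (R ⧸ I) := IsArtinianRing.of_finite K _
  let B (i : s) := Localization.AtPrime (p i) ⧸ I.map (algebraMap R (Localization.AtPrime (p i)))
  have hsurj (i : s) : Function.Surjective (algebraMap R (B i)) :=
    algebraMap_quotient_map_surjective (p i).primeCompl
  have hunit (i : s) (x : R) (hx : x ∉ p i) : IsUnit (algebraMap R (B i) x) :=
    (IsLocalization.map_units (Localization.AtPrime (p i)) (⟨x, hx⟩ : (p i).primeCompl)).map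
      (Ideal.Quotient.mk _)
  have hpi : Function.Surjective (RingHom.pi fun i : s => algebraMap R (B i)) :=
    pi_surjective_of_isCoprime_ker hsurj fun i j hij => isCoprime_ker_of_ne (hsurj i) (hsurj j)
      (hp.ne (Subtype.coe_injective.ne hij)) (hunit i) (hunit j)
  let φ : (R ⧸ I) →ₗ[K] ∀ i, B i :=
    LinearMap.pi fun i => (Ideal.quotientMapₐ _
      (IsScalarTower.toAlgHom K R (Localization.AtPrime (p i))) Ideal.le_comap_map).toLinearMap
  have hφ : Function.Surjective φ := fun b =>
    let ⟨r, hr⟩ := hpi b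
    ⟨Ideal.Quotient.mk I r, hr⟩
  have hfinite (i : s) : Module.Finite K (B i) := .of_surjective (LinearMap.proj i ∘ₗ φ)
    ((Function.surjective_eval i).comp hφ)
  calc ∑ i ∈ s, Module.finrank K
        (Localization.AtPrime (p i) ⧸ I.map (algebraMap R (Localization.AtPrime (p i))))
      = ∑ i : s, Module.finrank K (B i) := (Finset.sum_coe_sort s _).symm
    _ = Module.finrank K (∀ i, B i) := (Module.finrank_pi_fintype K).symm
    _ ≤ Module.finrank K (R ⧸ I) := LinearMap.finrank_le_finrank_of_surjective hφ

end LocalRings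

lemma finsum_le_of_forall_sum_le {ι M : Type*} [AddCommMonoid M] [Preorder M] {u : ι → M} {c : M}
    (hu : ∀ s : Finset ι, ∑ i ∈ s, u i ≤ c) : ∑ᶠ i, u i ≤ c := by
  classical
  rw [finsum_def]
  split_ifs
  exacts [hu _, hu ∅]

theorem stmt12_general {K ι : Type*} [Field K] {f g : MvPolynomial (Fin 2) K}
    (hf : MeetsAxes f.support) (hg : MeetsAxes g.support) (hfg : IsRelPrime f g)
    {p : ι → Ideal (MvPolynomial (Fin 2) K)} [∀ i, (p i).IsPrime] (hp : Function.Injective p) :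
    ∑ᶠ i, (Module.finrank K (Localization.AtPrime (p i) ⧸
        Ideal.span {algebraMap _ (Localization.AtPrime (p i)) f,
          algebraMap _ (Localization.AtPrime (p i)) g}) : ℝ) ≤
      area (newtonHull (f * g).support) - area (newtonHull f.support) -
        area (newtonHull g.support) := by
  obtain ⟨hfinite, hbound⟩ := finite_quotient_and_finrank_le_area_sub hf hg hfg
  refine finsum_le_of_forall_sum_le fun s => le_trans ?_ hbound
  rw [← Nat.cast_sum, Nat.cast_le]
  refine (Finset.sum_congr rfl fun i _ => ?_).trans_le (sum_finrank_localization_quotient_le K hp s)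
  rw [Ideal.map_span, Set.image_pair]

lemma QuasiConvenient.meetsAxes_support {f : P2} (hf : QuasiConvenient f) :
    MeetsAxes f.support :=
  hf.imp (.imp fun _ => mem_support_iff.2) (.imp fun _ => mem_support_iff.2)

lemma mIdeal_injective : Function.Injective mIdeal := by
  intro P Q hPQ
  have hP (i : Fin 2) : X i - C (![P.1, P.2] i) ∈ mIdeal Q := by
    rw [← hPQ, mIdeal, RingHom.mem_ker, map_sub, eval_X, eval_C, sub_self]
  have hQ (i : Fin 2) : ![Q.1, Q.2] i = ![P.1, P.2] i := by
    simpa only [mIdeal, RingHom.mem_ker, map_sub, eval_X, eval_C, sub_eq_zero] using hP i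
  exact Prod.ext (hQ 0).symm (hQ 1).symm

/-- Kouchnirenko–Bernstein theorem, upper bound. -/
theorem stmt12 (f g : P2) (hf : QuasiConvenient f) (hg : QuasiConvenient g)
    (hco : CoprimeDiv f g) :
    ∑ᶠ Pt : ℂ × ℂ, (interMult f g Pt : ℝ) ≤ nuInf f g :=
  stmt12_general hf.meetsAxes_support hg.meetsAxes_support (fun d => hco d) mIdeal_injective
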